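/- The price of stability of exact mixed Nash equilibria in liquid democracy games is zero: for every γ > 0 there exists a liquid democracy game such that every mixed-strategy Nash equilibrium x satisfies SW(x) ≤ γ · OPT. -/

import Mathlib

/-!
Consider three agents and a small `ε > 0`. Agents `0` and `1` value only guru `1`, at `ε`, and
agent `2` values only guru `0`, at `1`. If everybody chooses agent `0`, the welfare is at least `1`.

In a Nash equilibrium agent `1` votes almost surely, since voting guarantees the utility `ε`, which
she obtains only when she is her own guru. Hence delegating to agent `1` guarantees `ε` to agent
`0`, so the guru of agent `0` is almost surely agent `1`, and agent `0` almost never votes. Agent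
`2` is thus left with utility `0`, and the welfare is at most `2 * ε`.
-/

open Finset

/-- The guru of agent `i` under pure profile `s` (where `s i = some j` means `i`
delegates to `j`, with `s i = some i` meaning `i` votes herself, and `s i = none`
meaning `i` abstains): follow delegation arcs for `n` steps; the endpoint is the
guru provided it votes itself. -/
def guru {n : ℕ} (s : Fin n → Option (Fin n)) (i : Fin n) : Option (Fin n) :=
  ((fun o => Option.bind o s)^[n] (some i)).bind
    (fun j => if s j = some j then some j else none)

/-- Utility of agent `i` in the pure profile `s`: `u i (g i)` if the guru exists, else `0`. -/
def pureUtil {n : ℕ} (u : Fin n → Fin n → ℝ) (s : Fin n → Option (Fin n)) (i : Fin n) : ℝ :=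
  (guru s i).elim 0 (u i)

/-- A mixed strategy for a single agent: nonnegative, total probability at most one
(the residual probability is abstention). -/
def IsStrat {n : ℕ} (y : Fin n → ℝ) : Prop := (∀ j, 0 ≤ y j) ∧ (∑ j, y j) ≤ 1

/-- A mixed strategy profile. -/
def IsMixed {n : ℕ} (x : Fin n → Fin n → ℝ) : Prop := ∀ i, IsStrat (x i)

/-- Probability that the independent randomization `x` produces the pure profile `s`. -/
def prob {n : ℕ} (x : Fin n → Fin n → ℝ) (s : Fin n → Option (Fin n)) : ℝ :=
  ∏ i, (s i).elim (1 - ∑ j, x i j) (x i)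

/-- Expected utility of agent `i` under the mixed profile `x`. -/
def util {n : ℕ} (u x : Fin n → Fin n → ℝ) (i : Fin n) : ℝ :=
  ∑ s : Fin n → Option (Fin n), prob x s * pureUtil u s i

/-- Expected social welfare of the mixed profile `x`. -/
def SW {n : ℕ} (u x : Fin n → Fin n → ℝ) : ℝ := ∑ i, util u x i

/-- The set of social-welfare values achievable by mixed profiles; `OPT` is its greatest element. -/
def SWvals {n : ℕ} (u : Fin n → Fin n → ℝ) : Set ℝ :=
  {w | ∃ x, IsMixed x ∧ w = SW u x}

/-- `x` is an `ε`-Nash equilibrium. -/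
def EpsNash {n : ℕ} (u : Fin n → Fin n → ℝ) (ε : ℝ) (x : Fin n → Fin n → ℝ) : Prop :=
  ∀ i y, IsStrat y → util u x i ≥ (1 - ε) * util u (Function.update x i y) i

/-- `x` is an (exact, mixed) Nash equilibrium. -/
def NashEq {n : ℕ} (u x : Fin n → Fin n → ℝ) : Prop :=
  ∀ i y, IsStrat y → util u x i ≥ util u (Function.update x i y) i

section

variable {n : ℕ} {u x : Fin n → Fin n → ℝ} {s : Fin n → Option (Fin n)} {y : Fin n → ℝ}
  {i j k : Fin n} {c : ℝ}

/-! ### Mixed strategies as probability distributions -/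

/-- The probability that the mixed strategy `y` assigns to a choice, where `none` stands for
abstention; `prob x` is the product of these distributions over all agents. -/
def choiceProb (y : Fin n → ℝ) (o : Option (Fin n)) : ℝ :=
  o.elim (1 - ∑ j, y j) y

lemma IsStrat.choiceProb_nonneg (hy : IsStrat y) : ∀ o, 0 ≤ choiceProb y o
  | none => sub_nonneg.2 hy.2
  | some j => hy.1 j

lemma sum_choiceProb (y : Fin n → ℝ) : ∑ o, choiceProb y o = 1 := by
  simp [choiceProb, Fintype.sum_option]

lemma exists_choiceProb_ne_zero (y : Fin n → ℝ) : ∃ o, choiceProb y o ≠ 0 := by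
  by_contra! h
  simpa [h] using sum_choiceProb y

lemma isStrat_single (j : Fin n) : IsStrat (Pi.single j 1) :=
  ⟨fun k => by rw [Pi.single_apply]; positivity, by simp⟩

lemma eq_some_of_choiceProb_single_ne_zero {o : Option (Fin n)}
    (h : choiceProb (Pi.single j 1) o ≠ 0) : o = some j := by
  cases o with
  | none => simp [choiceProb] at h
  | some k =>
    by_contra hk
    exact h (Pi.single_eq_of_ne (fun hkj => hk (congrArg some hkj)) 1)

lemma IsMixed.prob_nonneg (hx : IsMixed x) (s : Fin n → Option (Fin n)) : 0 ≤ prob x s :=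
  prod_nonneg fun i _ => (hx i).choiceProb_nonneg (s i)

lemma sum_prob (x : Fin n → Fin n → ℝ) : ∑ s, prob x s = 1 :=
  calc ∑ s, prob x s = ∏ i, ∑ o, choiceProb (x i) o :=
        (Fintype.prod_sum fun i o => choiceProb (x i) o).symm
    _ = 1 := prod_eq_one fun i _ => sum_choiceProb (x i)

lemma prob_ne_zero_iff : prob x s ≠ 0 ↔ ∀ i, choiceProb (x i) (s i) ≠ 0 := by
  simp only [prob, choiceProb, prod_ne_zero_iff, mem_univ, forall_const]

/-! ### Almost sure events -/

/-- The event `p` has probability one under the mixed profile `x`. Since there are finitely many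
pure profiles, this is expressed as `p` holding at each one of nonzero probability. -/
def AlmostSurely (x : Fin n → Fin n → ℝ) (p : (Fin n → Option (Fin n)) → Prop) : Prop :=
  ∀ s, prob x s ≠ 0 → p s

lemma almostSurely_apply_iff {p : Option (Fin n) → Prop} :
    AlmostSurely x (fun s => p (s i)) ↔ ∀ o, choiceProb (x i) o ≠ 0 → p o := by
  refine ⟨fun h o ho => ?_, fun h s hs => h (s i) (prob_ne_zero_iff.1 hs i)⟩
  choose t ht using fun l => exists_choiceProb_ne_zero (x l)
  have hprob : prob x (Function.update t i o) ≠ 0 := prob_ne_zero_iff.2 fun l => by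
    obtain rfl | hl := eq_or_ne l i
    · rwa [Function.update_self]
    · rw [Function.update_of_ne hl]
      exact ht l
  simpa only [Function.update_self] using h _ hprob

lemma almostSurely_apply_update_of_ne {p : Option (Fin n) → Prop} (hik : i ≠ k) :
    AlmostSurely (Function.update x k y) (fun s => p (s i)) ↔
      AlmostSurely x (fun s => p (s i)) := by
  simp only [almostSurely_apply_iff, Function.update_of_ne hik]

lemma almostSurely_eq_some_of_eq_single (hi : x i = Pi.single j 1) :
    AlmostSurely x (fun s => s i = some j) :=
  (almostSurely_apply_iff (p := (· = some j))).2 fun _ ho =>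
    eq_some_of_choiceProb_single_ne_zero (hi ▸ ho)

/-! ### Expected utility -/

lemma sum_prob_mul_const (x : Fin n → Fin n → ℝ) (c : ℝ) : ∑ s, prob x s * c = c := by
  rw [← sum_mul, sum_prob, one_mul]

lemma util_eq_of_almostSurely (h : AlmostSurely x (fun s => pureUtil u s i = c)) :
    util u x i = c :=
  calc util u x i = ∑ s, prob x s * c := sum_congr rfl fun s _ => by
        obtain hs | hs := eq_or_ne (prob x s) 0
        · rw [hs, zero_mul, zero_mul]
        · rw [h s hs]
    _ = c := sum_prob_mul_const x c

lemma prob_mul_pureUtil_le (hx : IsMixed x) (h : ∀ s, pureUtil u s i ≤ c) :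
    ∀ s ∈ univ, prob x s * pureUtil u s i ≤ prob x s * c :=
  fun s _ => mul_le_mul_of_nonneg_left (h s) (hx.prob_nonneg s)

lemma util_le_of_pureUtil_le (hx : IsMixed x) (h : ∀ s, pureUtil u s i ≤ c) : util u x i ≤ c :=
  (sum_le_sum (prob_mul_pureUtil_le hx h)).trans_eq (sum_prob_mul_const x c)

lemma almostSurely_pureUtil_eq_of_le_util (hx : IsMixed x) (h : ∀ s, pureUtil u s i ≤ c)
    (hc : c ≤ util u x i) : AlmostSurely x (fun s => pureUtil u s i = c) := by
  have hutil : util u x i = ∑ s, prob x s * c :=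
    ((util_le_of_pureUtil_le hx h).antisymm hc).trans (sum_prob_mul_const x c).symm
  have hterms := (sum_eq_sum_iff_of_le (prob_mul_pureUtil_le hx h)).1 hutil
  exact fun s hs => mul_left_cancel₀ hs (hterms s (mem_univ s))

lemma pureUtil_of_guru_eq (h : guru s i = some j) : pureUtil u s i = u i j := by
  simp only [pureUtil, h, Option.elim_some]

lemma pureUtil_nonneg (hu : ∀ j, 0 ≤ u i j) : 0 ≤ pureUtil u s i := by
  unfold pureUtil
  cases guru s i with
  | none => exact le_rfl
  | some j => exact hu j

lemma util_nonneg (hu : ∀ j, 0 ≤ u i j) (hx : IsMixed x) : 0 ≤ util u x i :=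
  sum_nonneg fun s _ => mul_nonneg (hx.prob_nonneg s) (pureUtil_nonneg hu)

lemma util_le_SW (hu : ∀ i j, 0 ≤ u i j) (hx : IsMixed x) (i : Fin n) : util u x i ≤ SW u x :=
  single_le_sum (fun l _ => util_nonneg (hu l) hx) (mem_univ i)

/-! ### Gurus and optimal welfare -/

lemma votes_of_guru_eq (h : guru s i = some j) : s j = some j := by
  obtain ⟨k, -, hk⟩ := Option.bind_eq_some_iff.1 h
  split_ifs at hk with hvote
  exact Option.some.inj hk ▸ hvote

lemma guru_eq_of_votes (hi : s i = some j) (hj : s j = some j) : guru s i = some j := by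
  obtain ⟨m, rfl⟩ : ∃ m, n = m + 1 := Nat.exists_eq_add_one.2 i.pos
  have hiter : (fun o => Option.bind o s)^[m + 1] (some i) = some j := by
    rw [Function.iterate_succ_apply, Option.bind_some, hi]
    exact Function.iterate_fixed hj m
  rw [guru, hiter, Option.bind_some, if_pos hj]

lemma utility_le_of_mem_upperBounds_SWvals {w : ℝ} (hu : ∀ i j, 0 ≤ u i j)
    (hw : w ∈ upperBounds (SWvals u)) (i j : Fin n) : u i j ≤ w := by
  let x : Fin n → Fin n → ℝ := fun _ => Pi.single j 1
  have hx : IsMixed x := fun _ => isStrat_single j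
  have hchoice (l : Fin n) : AlmostSurely x (fun s => s l = some j) :=
    almostSurely_eq_some_of_eq_single rfl
  have hutil : util u x i = u i j := util_eq_of_almostSurely fun s hs =>
    pureUtil_of_guru_eq (guru_eq_of_votes (hchoice i s hs) (hchoice j s hs))
  calc u i j = util u x i := hutil.symm
    _ ≤ SW u x := util_le_SW hu hx i
    _ ≤ w := hw ⟨x, hx, rfl⟩

/-! ### Unique best gurus in equilibrium -/

/-- Agent `i` strictly prefers `j` as her guru to any other guru and to having no guru, the
latter being worth `0`. -/
def IsUniqueBestGuru (u : Fin n → Fin n → ℝ) (i j : Fin n) : Prop :=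
  0 < u i j ∧ ∀ k, k ≠ j → u i k < u i j

lemma isUniqueBestGuru_of_eq_single (hi : u i = Pi.single j c) (hc : 0 < c) :
    IsUniqueBestGuru u i j := by
  simp +contextual [IsUniqueBestGuru, hi, hc]

namespace IsUniqueBestGuru

lemma pureUtil_lt (hj : IsUniqueBestGuru u i j) (hs : guru s i ≠ some j) :
    pureUtil u s i < u i j := by
  unfold pureUtil
  cases hg : guru s i with
  | none => exact hj.1
  | some k => exact hj.2 k fun hk => hs (hg.trans (congrArg some hk))

lemma pureUtil_le (hj : IsUniqueBestGuru u i j) (s : Fin n → Option (Fin n)) :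
    pureUtil u s i ≤ u i j := by
  by_cases hs : guru s i = some j
  · exact (pureUtil_of_guru_eq hs).le
  · exact (hj.pureUtil_lt hs).le

lemma util_le (hj : IsUniqueBestGuru u i j) (hx : IsMixed x) : util u x i ≤ u i j :=
  util_le_of_pureUtil_le hx hj.pureUtil_le

end IsUniqueBestGuru

namespace NashEq

lemma almostSurely_guru_eq (hN : NashEq u x) (hx : IsMixed x) (hj : IsUniqueBestGuru u i j)
    (hvote : AlmostSurely (Function.update x i (Pi.single j 1)) (fun s => s j = some j)) :
    AlmostSurely x (fun s => guru s i = some j) := by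
  have hchoice : AlmostSurely (Function.update x i (Pi.single j 1)) (fun s => s i = some j) :=
    almostSurely_eq_some_of_eq_single (Function.update_self ..)
  have hdev : util u (Function.update x i (Pi.single j 1)) i = u i j :=
    util_eq_of_almostSurely fun s hs =>
      pureUtil_of_guru_eq (guru_eq_of_votes (hchoice s hs) (hvote s hs))
  have hutil : u i j ≤ util u x i := hdev.ge.trans (hN i _ (isStrat_single j))
  intro s hs
  by_contra hne
  exact (hj.pureUtil_lt hne).ne
    (almostSurely_pureUtil_eq_of_le_util hx hj.pureUtil_le hutil s hs)

lemma almostSurely_votes (hN : NashEq u x) (hx : IsMixed x) (hi : IsUniqueBestGuru u i i) :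
    AlmostSurely x (fun s => s i = some i) := fun s hs =>
  votes_of_guru_eq <| hN.almostSurely_guru_eq hx hi
    (almostSurely_eq_some_of_eq_single (Function.update_self ..)) s hs

lemma almostSurely_not_votes (hN : NashEq u x) (hx : IsMixed x) (hij : i ≠ j)
    (hi : IsUniqueBestGuru u i j) (hj : IsUniqueBestGuru u j j) :
    AlmostSurely x (fun s => s i ≠ some i) := by
  have hguru : AlmostSurely x (fun s => guru s i = some j) :=
    hN.almostSurely_guru_eq hx hi <|
      (almostSurely_apply_update_of_ne (p := (· = some j)) hij.symm).2
        (hN.almostSurely_votes hx hj)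
  intro s hs hvote
  have hself : guru s i = some i := guru_eq_of_votes hvote hvote
  exact hij (Option.some.inj (hself.symm.trans (hguru s hs)))

end NashEq

lemma util_eq_zero_of_almostSurely_not_votes (hk : u k = Pi.single i c)
    (h : AlmostSurely x (fun s => s i ≠ some i)) : util u x k = 0 := by
  refine util_eq_of_almostSurely fun s hs => ?_
  cases hg : guru s k with
  | none => simp only [pureUtil, hg, Option.elim_none]
  | some l =>
    have hli : l ≠ i := fun hl => h s hs (votes_of_guru_eq (hl ▸ hg))
    rw [pureUtil_of_guru_eq hg, hk, Pi.single_eq_of_ne hli]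

end

/-! ### The three-agent game -/

/-- The game witnessing that the price of stability is at most `2 * ε`: agents `0` and `1` value
only guru `1`, at `ε`, and agent `2` values only guru `0`, at `1`. -/
def threeAgentGame (ε : ℝ) : Fin 3 → Fin 3 → ℝ :=
  ![Pi.single 1 ε, Pi.single 1 ε, Pi.single 0 1]

lemma threeAgentGame_mem_Icc {ε : ℝ} (hε : ε ∈ Set.Icc 0 1) (i j : Fin 3) :
    threeAgentGame ε i j ∈ Set.Icc 0 1 := by
  obtain ⟨hε₀, hε₁⟩ := hε
  fin_cases i <;> fin_cases j <;> simp [threeAgentGame, hε₀, hε₁]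

lemma NashEq.SW_threeAgentGame_le {ε : ℝ} (hε : 0 < ε) {x : Fin 3 → Fin 3 → ℝ}
    (hN : NashEq (threeAgentGame ε) x) (hx : IsMixed x) : SW (threeAgentGame ε) x ≤ 2 * ε := by
  have hbest₀ : IsUniqueBestGuru (threeAgentGame ε) 0 1 := isUniqueBestGuru_of_eq_single rfl hε
  have hbest₁ : IsUniqueBestGuru (threeAgentGame ε) 1 1 := isUniqueBestGuru_of_eq_single rfl hε
  have hutil₀ : util (threeAgentGame ε) x 0 ≤ ε := hbest₀.util_le hx
  have hutil₁ : util (threeAgentGame ε) x 1 ≤ ε := hbest₁.util_le hx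
  have hutil₂ : util (threeAgentGame ε) x 2 = 0 :=
    util_eq_zero_of_almostSurely_not_votes rfl
      (hN.almostSurely_not_votes hx zero_ne_one hbest₀ hbest₁)
  rw [SW, Fin.sum_univ_three]
  linarith

/-- The price of stability of exact mixed Nash equilibria is zero: for every γ > 0
there is a liquid democracy game in which every mixed Nash equilibrium x has
SW(x) ≤ γ · OPT. -/
theorem stmt2 (γ : ℝ) (hγ : 0 < γ) :
    ∃ (n : ℕ) (u : Fin n → Fin n → ℝ),
      (∀ i j, 0 ≤ u i j ∧ u i j ≤ 1) ∧
      ∀ OPT : ℝ, IsGreatest (SWvals u) OPT →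
        ∀ x, IsMixed x → NashEq u x → SW u x ≤ γ * OPT := by
  obtain ⟨ε, hε, hεmin⟩ : ∃ ε, 0 < ε ∧ ε < min 1 (γ / 2) := exists_between (by positivity)
  obtain ⟨hε₁, hεγ⟩ := lt_min_iff.1 hεmin
  have hu := threeAgentGame_mem_Icc ⟨hε.le, hε₁.le⟩
  refine ⟨3, threeAgentGame ε, hu, fun OPT hOPT x hx hN => ?_⟩
  have hone : 1 ≤ OPT :=
    utility_le_of_mem_upperBounds_SWvals (fun i j => (hu i j).1) hOPT.2 2 0
  calc SW (threeAgentGame ε) x ≤ 2 * ε := hN.SW_threeAgentGame_le hε hx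
    _ ≤ γ := by linarith
    _ ≤ γ * OPT := le_mul_of_one_le_right hγ.le hone
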